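/- arXiv:2401.08475 — 9 statements merged into one kernel-verified Lean document; each statement's English description precedes it below -/
import Mathlib

section
/- Let R ⊆ X × Y be a relation between finite sets, and let A ⊆ X. Define the relation R_St ⊆ X × Y_A, where Y_A = ⋃_{x∈A} R(x), by (x,y) ∈ R_St iff y ∈ Y_A and (x,y) ∈ R. Then the Dowker complex K_{R_St} equals the union of closed stars ⋃_{x∈A} St̄(x) taken in K_R; that is, a nonempty finite set σ ⊆ X is a simplex of K_{R_St} if and only if σ belongs to St̄_{K_R}(x) for some x ∈ A. -/
/-- The Dowker complex of a relation `R ⊆ X × Y`: its simplices are the nonempty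
finite subsets `σ ⊆ X` such that some `y ∈ Y` is related to every element of `σ`. -/
def DowkerK {X Y : Type*} (R : X → Y → Prop) : Set (Finset X) :=
  {σ | σ.Nonempty ∧ ∃ y, ∀ x ∈ σ, R x y}

/-- The closed star of a vertex `x` in a simplicial complex `K`. -/
def ClosedStar {V : Type*} (K : Set (Finset V)) (x : V) : Set (Finset V) :=
  {σ | σ ∈ K ∧ ∃ τ ∈ K, σ ⊆ τ ∧ x ∈ τ}

theorem mem_closedStar_iff_insert_mem {V : Type*} [DecidableEq V] {K : Set (Finset V)}
    (down_closed : ∀ ⦃σ τ : Finset V⦄, τ ∈ K → σ ⊆ τ → σ.Nonempty → σ ∈ K)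
    {σ : Finset V} {x : V} :
    σ ∈ ClosedStar K x ↔ σ ∈ K ∧ insert x σ ∈ K := by
  refine and_congr_right fun _ => ⟨?_, fun h => ?_⟩
  · rintro ⟨τ, hτ, hστ, hxτ⟩
    exact down_closed hτ (Finset.insert_subset hxτ hστ) (Finset.insert_nonempty x σ)
  · exact ⟨insert x σ, h, Finset.subset_insert x σ, Finset.mem_insert_self x σ⟩

section Dowker

variable {X Y : Type*} {R : X → Y → Prop} {σ τ : Finset X}

theorem mem_dowkerK_of_subset (hτ : τ ∈ DowkerK R) (hστ : σ ⊆ τ) (hσ : σ.Nonempty) :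
    σ ∈ DowkerK R := by
  obtain ⟨-, y, hy⟩ := hτ
  exact ⟨hσ, y, fun x hx => hy x (hστ hx)⟩

theorem insert_mem_dowkerK_iff [DecidableEq X] {a : X} :
    insert a σ ∈ DowkerK R ↔ ∃ y, R a y ∧ ∀ x ∈ σ, R x y := by
  simp only [DowkerK, Set.mem_ofPred_eq, Finset.insert_nonempty, true_and,
    Finset.forall_mem_insert]

theorem mem_closedStar_dowkerK_iff {a : X} :
    σ ∈ ClosedStar (DowkerK R) a ↔ σ.Nonempty ∧ ∃ y, R a y ∧ ∀ x ∈ σ, R x y := by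
  classical
  -- `y` has to witness `insert a σ`: a witness of `σ ∈ DowkerK R` need not be related to `a`.
  rw [mem_closedStar_iff_insert_mem fun _ _ => mem_dowkerK_of_subset, ← insert_mem_dowkerK_iff]
  exact ⟨fun ⟨hσ, hins⟩ => ⟨hσ.1, hins⟩,
    fun ⟨hσ, hins⟩ => ⟨mem_dowkerK_of_subset hins (Finset.subset_insert a σ) hσ, hins⟩⟩

theorem mem_dowkerK_and_iff {p : Y → Prop} :
    σ ∈ DowkerK (fun x y => p y ∧ R x y) ↔ σ.Nonempty ∧ ∃ y, p y ∧ ∀ x ∈ σ, R x y :=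
  and_congr_right fun hσ => exists_congr fun y => by
    rw [forall₂_and, hσ.forall_const]

end Dowker

theorem dowker_star_relation_general {X Y : Type*} (R : X → Y → Prop) (A : Set X) :
    DowkerK (fun x y => (∃ a ∈ A, R a y) ∧ R x y) = ⋃ a ∈ A, ClosedStar (DowkerK R) a := by
  ext σ
  simp only [Set.mem_iUnion₂, mem_closedStar_dowkerK_iff, mem_dowkerK_and_iff]
  constructor
  · rintro ⟨hσ, y, ⟨a, ha, hay⟩, hy⟩
    exact ⟨a, ha, hσ, y, hay, hy⟩
  · rintro ⟨a, ha, hσ, y, hay, hy⟩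
    exact ⟨hσ, y, ⟨a, ha, hay⟩, hy⟩

/-- For a relation `R ⊆ X × Y` between finite sets and `A ⊆ X`, the Dowker
complex of the relation `R_St ⊆ X × Y_A` (where `Y_A = ⋃_{x∈A} R(x)` and
`(x,y) ∈ R_St ↔ y ∈ Y_A ∧ (x,y) ∈ R`) equals the union of the closed stars
`⋃_{x∈A} St̄(x)` taken in `K_R`. -/
theorem dowker_star_relation {X Y : Type*} [Fintype X] [Fintype Y]
    (R : X → Y → Prop) (A : Set X) :
    ∀ σ : Finset X,
      σ ∈ DowkerK (fun x y => (∃ a ∈ A, R a y) ∧ R x y) ↔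
        ∃ x ∈ A, σ ∈ ClosedStar (DowkerK R) x := by
  simp only [dowker_star_relation_general, Set.mem_iUnion₂, exists_prop, implies_true]
end

section
/- Let R ⊆ X × Y be a relation between finite sets and suppose x₁, x₂ ∈ X are distinct with R(x₁) ⊆ R(x₂). Let R′ ⊆ (X \ {x₁}) × Y be the restriction of R, i.e., R′(x) = R(x) for all x ∈ X \ {x₁}. Then the Dowker complexes L_R and L_{R′} on Y are equal: a nonempty finite subset τ ⊆ Y is a simplex of L_R if and only if it is a simplex of L_{R′}. -/
/-- The Dowker complex `L_R` of a relation `R ⊆ X × Y`: its simplices are the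
nonempty finite subsets `τ ⊆ Y` such that some `x ∈ X` is related to every
element of `τ`. -/
def DowkerL {X Y : Type*} (R : X → Y → Prop) : Set (Finset Y) :=
  {τ | τ.Nonempty ∧ ∃ x, ∀ y ∈ τ, R x y}

section

variable {X X' Y : Type*}

theorem dowkerL_subset_of_forall_row_le {R : X → Y → Prop} {S : X' → Y → Prop}
    (hRS : ∀ x, ∃ x', R x ≤ S x') : DowkerL R ⊆ DowkerL S := by
  rintro τ ⟨hτ, x, hx⟩
  obtain ⟨x', hxx'⟩ := hRS x
  exact ⟨hτ, x', fun y hy => hxx' y (hx y hy)⟩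

theorem dowkerL_eq_subtype_of_forall_row_le {R : X → Y → Prop} {p : X → Prop}
    (hp : ∀ x, ∃ x', p x' ∧ R x ≤ R x') :
    DowkerL R = DowkerL fun (x : Subtype p) y => R x.1 y := by
  apply Set.Subset.antisymm
  · refine dowkerL_subset_of_forall_row_le fun x => ?_
    obtain ⟨x', hx', hxx'⟩ := hp x
    exact ⟨⟨x', hx'⟩, hxx'⟩
  · exact dowkerL_subset_of_forall_row_le fun x => ⟨x.1, le_rfl⟩

theorem dowkerL_remove_dominated_row_general (R : X → Y → Prop) (x₁ x₂ : X) (hne : x₁ ≠ x₂)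
    (hsub : ∀ y, R x₁ y → R x₂ y) :
    DowkerL R = DowkerL fun (x : {x : X // x ≠ x₁}) y => R x.1 y := by
  refine dowkerL_eq_subtype_of_forall_row_le fun x => ?_
  rcases eq_or_ne x x₁ with rfl | hx
  · exact ⟨x₂, hne.symm, hsub⟩
  · exact ⟨x, hx, le_rfl⟩

end

/-- If `x₁ ≠ x₂` and `R(x₁) ⊆ R(x₂)`, then removing the row `x₁`
(restricting `R` to `(X \ {x₁}) × Y`) does not change the Dowker complex on `Y`:
`L_R = L_{R′}`. -/
theorem dowkerL_remove_dominated_row {X Y : Type*} [Fintype X] [Fintype Y]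
    (R : X → Y → Prop) (x₁ x₂ : X) (hne : x₁ ≠ x₂)
    (hsub : ∀ y, R x₁ y → R x₂ y) :
    ∀ τ : Finset Y,
      τ ∈ DowkerL R ↔ τ ∈ DowkerL (fun (x : {x : X // x ≠ x₁}) y => R x.1 y) :=
  Set.ext_iff.mp (dowkerL_remove_dominated_row_general R x₁ x₂ hne hsub)
end

section
/- Let R ⊆ X × Y be a relation between finite sets such that R⁻¹(y) ≠ ∅ for every y ∈ Y and R is column irreducible. Then the map y ↦ R⁻¹(y) is a bijection from Y onto the set of toplexes (inclusion-maximal simplices) of the Dowker complex K_R. -/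
/-- A toplex of a simplicial complex: an inclusion-maximal simplex. -/
def IsToplex {V : Type*} (K : Set (Finset V)) (σ : Finset V) : Prop :=
  σ ∈ K ∧ ∀ τ ∈ K, σ ⊆ τ → σ = τ

/-!
A simplex of the Dowker complex is a nonempty finite set contained in some column, so when the
columns are finite and nonempty the toplexes are the inclusion-maximal columns. Irreducibility says
that the columns form an antichain indexed without repetition.
-/

section

variable {X Y : Type*} {R : X → Y → Prop}

theorem toFinset_column_mem_dowkerK {y : Y} (hfin : {x | R x y}.Finite) (hne : ∃ x, R x y) :
    hfin.toFinset ∈ DowkerK R :=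
  ⟨hfin.toFinset_nonempty.mpr hne, y, fun _ hx => hfin.mem_toFinset.mp hx⟩

theorem exists_subset_toFinset_column_of_mem_dowkerK (hfin : ∀ y, {x | R x y}.Finite)
    {σ : Finset X} (hσ : σ ∈ DowkerK R) : ∃ y, σ ⊆ (hfin y).toFinset := by
  obtain ⟨-, y, hy⟩ := hσ
  exact ⟨y, (hfin y).subset_toFinset.mpr hy⟩

theorem IsToplex.exists_toFinset_column_eq (hfin : ∀ y, {x | R x y}.Finite) {σ : Finset X}
    (hσ : IsToplex (DowkerK R) σ) : ∃ y, (hfin y).toFinset = σ := by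
  obtain ⟨hmem, hmax⟩ := hσ
  obtain ⟨y, hσy⟩ := exists_subset_toFinset_column_of_mem_dowkerK hfin hmem
  have hne : ∃ x, R x y := (hfin y).toFinset_nonempty.mp (hmem.1.mono hσy)
  exact ⟨y, (hmax _ (toFinset_column_mem_dowkerK (hfin y) hne) hσy).symm⟩

theorem isToplex_toFinset_column_of_maximal {y : Y} (hfin : {x | R x y}.Finite)
    (hne : ∃ x, R x y) (hmax : ∀ z, {x | R x y} ⊆ {x | R x z} → {x | R x z} ⊆ {x | R x y}) :
    IsToplex (DowkerK R) hfin.toFinset := by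
  refine ⟨toFinset_column_mem_dowkerK hfin hne, ?_⟩
  rintro τ ⟨-, z, hτz⟩ hyτ
  have hyz : {x | R x y} ⊆ {x | R x z} := (hfin.toFinset_subset.mp hyτ).trans hτz
  have hτy : τ ⊆ hfin.toFinset := hfin.subset_toFinset.mpr fun x hx => hmax z hyz (hτz x hx)
  exact hyτ.antisymm hτy

theorem eq_of_column_subset_column
    (hirr : ∀ y₁ y₂ : Y, y₁ ≠ y₂ → ¬ ({x | R x y₁} ⊆ {x | R x y₂})) {y z : Y}
    (h : {x | R x y} ⊆ {x | R x z}) : y = z :=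
  not_imp_not.mp (hirr y z) h

end

theorem column_irreducible_toplex_bijection_general {X Y : Type*} (R : X → Y → Prop)
    (hfin : ∀ y, {x | R x y}.Finite) (hcol : ∀ y, ∃ x, R x y)
    (hirr : ∀ y₁ y₂ : Y, y₁ ≠ y₂ → ¬ ({x | R x y₁} ⊆ {x | R x y₂})) :
    Set.BijOn (fun y => (hfin y).toFinset) Set.univ {σ : Finset X | IsToplex (DowkerK R) σ} := by
  refine ⟨fun y _ => ?mapsTo, fun y _ z _ hyz => ?injOn, fun σ hσ => ?surjOn⟩
  case mapsTo =>
    refine isToplex_toFinset_column_of_maximal (hfin y) (hcol y) fun z hyz => ?_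
    rw [eq_of_column_subset_column hirr hyz]
  case injOn =>
    exact eq_of_column_subset_column hirr (Set.Finite.toFinset_inj.mp hyz).subset
  case surjOn =>
    obtain ⟨y, hy⟩ := IsToplex.exists_toFinset_column_eq hfin hσ
    exact ⟨y, Set.mem_univ y, hy⟩

/-- If `R ⊆ X × Y` is a relation between finite sets with all columns
nonempty and `R` is column irreducible (for distinct `y₁, y₂`, `R⁻¹(y₁) ⊄ R⁻¹(y₂)`),
then `y ↦ R⁻¹(y)` is a bijection from `Y` onto the set of toplexes of `K_R`. -/
theorem column_irreducible_toplex_bijection {X Y : Type*} [Fintype X] [Fintype Y]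
    [DecidableEq X] (R : X → Y → Prop) [∀ x y, Decidable (R x y)]
    (hcol : ∀ y, ∃ x, R x y)
    (hirr : ∀ y₁ y₂ : Y, y₁ ≠ y₂ → ¬ ({x | R x y₁} ⊆ {x | R x y₂})) :
    Set.BijOn (fun y => Finset.univ.filter (fun x => R x y)) Set.univ
      {σ : Finset X | IsToplex (DowkerK R) σ} := by
  simpa only [Set.Finite.toFinset_ofPred] using
    column_irreducible_toplex_bijection_general R (fun _ => Set.toFinite _) hcol hirr
end

section
/- Let R ⊆ X × Y be a relation between finite sets, let A ⊆ X with ⋃_{x∈A} R(x) ≠ ∅, and let z ∉ X. Define R′ ⊆ (X ∪ {z}) × Y by R′(z) = ⋃_{x∈A} R(x) and R′(x) = R(x) for x ∈ X. Then K_{R′} = K_R ∪ (z * L), where L = ⋃_{x∈A} St̄_{K_R}(x) is the union of the closed stars of the vertices of A in K_R. -/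
/-- The simplicial cone `z * L` on a collection of simplices `L`:
`L ∪ {{z}} ∪ {σ ∪ {z} : σ ∈ L}`. -/
def Cone {V : Type*} [DecidableEq V] (z : V) (L : Set (Finset V)) : Set (Finset V) :=
  L ∪ {{z}} ∪ {τ | ∃ σ ∈ L, τ = insert z σ}

/-!
Adjoining a vertex `z` with an arbitrary nonempty row `S ⊆ Y` glues onto `K_R` the cone over the
Dowker complex of `R` restricted to the columns in `S`: a simplex containing `z` is exactly one
whose witness lies in `S`. The closed star of `a` is the Dowker complex of `R` restricted to the
columns in `R(a)`, because a witness `y ∈ R(a)` for `σ` also witnesses `σ ∪ {a}`. Hence for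
`S = ⋃_{a ∈ A} R(a)` the base of the cone is the union of the closed stars.
-/

/-- The relation obtained from `R` by adjoining a new vertex whose row is `S`. The new vertex
is `none : Option X`, and the old vertices are the elements `some x`. -/
def addRow {X Y : Type*} (R : X → Y → Prop) (S : Set Y) (w : Option X) (y : Y) : Prop :=
  w.elim (y ∈ S) (fun x => R x y)

section

variable {X Y : Type*} (R : X → Y → Prop)

theorem closedStar_dowkerK (a : X) :
    ClosedStar (DowkerK R) a = DowkerK (fun x (y : {y // R a y}) => R x y) := by
  classical
  ext σ
  constructor
  · rintro ⟨⟨hσ, -⟩, τ, ⟨-, y, hy⟩, hστ, haτ⟩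
    exact ⟨hσ, ⟨y, hy a haτ⟩, fun x hx => hy x (hστ hx)⟩
  · rintro ⟨hσ, ⟨y, hay⟩, hy⟩
    have hinsert : insert a σ ∈ DowkerK R :=
      ⟨Finset.insert_nonempty a σ, y, Finset.forall_mem_insert _ _ _ |>.2 ⟨hay, hy⟩⟩
    exact ⟨⟨hσ, y, hy⟩, insert a σ, hinsert, Finset.subset_insert a σ, Finset.mem_insert_self a σ⟩

theorem exists_mem_closedStar_dowkerK_iff (A : Set X) (σ : Finset X) :
    (∃ a ∈ A, σ ∈ ClosedStar (DowkerK R) a) ↔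
      σ ∈ DowkerK (fun x (y : {y | ∃ a ∈ A, R a y}) => R x y) := by
  simp only [closedStar_dowkerK]
  constructor
  · rintro ⟨a, ha, hσ, ⟨y, hay⟩, hy⟩
    exact ⟨hσ, ⟨y, a, ha, hay⟩, hy⟩
  · rintro ⟨hσ, ⟨y, a, ha, hay⟩, hy⟩
    exact ⟨a, ha, hσ, ⟨y, hay⟩, hy⟩

variable [DecidableEq X]

theorem eq_image_some_or_eq_insert_none (σ : Finset (Option X)) :
    ∃ τ : Finset X, σ = τ.image some ∨ σ = insert none (τ.image some) := by
  refine ⟨σ.eraseNone, ?_⟩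
  rw [Finset.image_some_eraseNone]
  by_cases hσ : none ∈ σ
  · exact .inr (Finset.insert_erase hσ).symm
  · exact .inl (Finset.erase_eq_of_notMem hσ).symm

variable (S : Set Y) (τ : Finset X)

theorem image_some_mem_dowkerK_addRow_iff :
    τ.image some ∈ DowkerK (addRow R S) ↔ τ ∈ DowkerK R := by
  simp [DowkerK, addRow]

theorem insert_none_mem_dowkerK_addRow_iff :
    insert none (τ.image some) ∈ DowkerK (addRow R S) ↔ ∃ y ∈ S, ∀ x ∈ τ, R x y := by
  simp [DowkerK, addRow]

variable {S} in
theorem dowkerK_addRow (hS : S.Nonempty) :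
    DowkerK (addRow R S) =
      {σ | ∃ τ ∈ DowkerK R, σ = τ.image some} ∪
        Cone none {σ | ∃ τ ∈ DowkerK (fun x (y : S) => R x y), σ = τ.image some} := by
  ext σ
  constructor
  · intro hσ
    obtain ⟨τ, rfl | rfl⟩ := eq_image_some_or_eq_insert_none σ
    · exact .inl ⟨τ, (image_some_mem_dowkerK_addRow_iff R S τ).1 hσ, rfl⟩
    · obtain ⟨y, hyS, hy⟩ := (insert_none_mem_dowkerK_addRow_iff R S τ).1 hσ
      obtain rfl | hτ := τ.eq_empty_or_nonempty
      · exact .inr (.inl (.inr rfl))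
      · exact .inr (.inr ⟨_, ⟨τ, ⟨hτ, ⟨y, hyS⟩, hy⟩, rfl⟩, rfl⟩)
  · rintro (⟨τ, hτ, rfl⟩ | (⟨τ, ⟨hτ, y, hy⟩, rfl⟩ | rfl) | ⟨_, ⟨τ, ⟨-, y, hy⟩, rfl⟩, rfl⟩)
    · exact (image_some_mem_dowkerK_addRow_iff R S τ).2 hτ
    · exact (image_some_mem_dowkerK_addRow_iff R S τ).2 ⟨hτ, y, hy⟩
    · obtain ⟨y, hy⟩ := hS
      exact (insert_none_mem_dowkerK_addRow_iff R S ∅).2 ⟨y, hy, by simp⟩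
    · exact (insert_none_mem_dowkerK_addRow_iff R S τ).2 ⟨y, y.2, hy⟩

end

theorem dowker_add_cone_general {X Y : Type*} [DecidableEq X]
    (R : X → Y → Prop) (A : Set X) (hA : ∃ y, ∃ x ∈ A, R x y) :
    DowkerK (fun (w : Option X) y => w.elim (∃ x ∈ A, R x y) (fun x => R x y)) =
      {σ | ∃ σ₀ ∈ DowkerK R, σ = σ₀.image some} ∪
        Cone (none : Option X)
          {σ | ∃ σ₀, (∃ x ∈ A, σ₀ ∈ ClosedStar (DowkerK R) x) ∧ σ = σ₀.image some} := by
  simp only [exists_mem_closedStar_dowkerK_iff]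
  exact dowkerK_addRow R hA

/-- Let `R ⊆ X × Y` be a relation between finite sets, `A ⊆ X` with
`⋃_{x∈A} R(x) ≠ ∅`, and `z ∉ X` a new element (encoded by `Option X` with `z = none`).
Define `R′` on `(X ∪ {z}) × Y` by `R′(z) = ⋃_{x∈A} R(x)` and `R′(x) = R(x)`.
Then `K_{R′} = K_R ∪ (z * L)` where `L = ⋃_{x∈A} St̄_{K_R}(x)`. -/
theorem dowker_add_cone {X Y : Type*} [Fintype X] [Fintype Y] [DecidableEq X]
    (R : X → Y → Prop) (A : Set X) (hA : ∃ y, ∃ x ∈ A, R x y) :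
    DowkerK (fun (w : Option X) y => w.elim (∃ x ∈ A, R x y) (fun x => R x y)) =
      {σ | ∃ σ₀ ∈ DowkerK R, σ = σ₀.image some} ∪
        Cone (none : Option X)
          {σ | ∃ σ₀, (∃ x ∈ A, σ₀ ∈ ClosedStar (DowkerK R) x) ∧ σ = σ₀.image some} :=
  dowker_add_cone_general R A hA
end

section
/- Let K be a finite abstract simplicial complex, A a finite set of vertices of K, L = ⋃_{x∈A} St̄(x) the union of their closed stars, z an element that is not a vertex of K, and K′ = K ∪ (z*L). Then z dominates every x ∈ A in K′: every toplex (inclusion-maximal simplex) of K′ that contains x also contains z. -/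
/-- An abstract simplicial complex: a collection of nonempty finite sets closed
under taking nonempty subsets. -/
def IsComplex {V : Type*} (K : Set (Finset V)) : Prop :=
  (∀ σ ∈ K, σ.Nonempty) ∧ (∀ σ ∈ K, ∀ τ, τ ⊆ σ → τ.Nonempty → τ ∈ K)

/-- `z` dominates `x` in `K`: every toplex of `K` through `x` also passes through `z`. This is the
relation that the coning construction establishes between the apex and the chosen vertices. It is
stated for any family `K` of finite sets and allows `z = x`. -/
def Dominates {V : Type*} (K : Set (Finset V)) (z x : V) : Prop :=
  ∀ σ : Finset V, IsToplex K σ → x ∈ σ → z ∈ σ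

theorem mem_closedStar_of_mem {V : Type*} {K : Set (Finset V)} {σ : Finset V} {x : V}
    (hσ : σ ∈ K) (hx : x ∈ σ) : σ ∈ ClosedStar K x :=
  ⟨hσ, σ, hσ, subset_rfl, hx⟩

section Cone

variable {V : Type*} [DecidableEq V] {K L : Set (Finset V)} {σ : Finset V} {x z : V}

theorem IsToplex.mem_of_insert_mem (hσ : IsToplex K σ) (hz : insert z σ ∈ K) : z ∈ σ :=
  Finset.insert_eq_self.mp (hσ.2 _ hz (Finset.subset_insert z σ)).symm

theorem insert_mem_cone (hσ : σ ∈ L) : insert z σ ∈ Cone z L :=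
  Or.inr ⟨σ, hσ, rfl⟩

theorem mem_or_apex_mem_of_mem_cone (hσ : σ ∈ Cone z L) : σ ∈ L ∨ z ∈ σ := by
  rcases hσ with (hL | rfl) | ⟨τ, -, rfl⟩
  · exact Or.inl hL
  · exact Or.inr (Finset.mem_singleton_self z)
  · exact Or.inr (Finset.mem_insert_self z τ)

theorem dominates_union_cone (hL : ∀ σ ∈ K, x ∈ σ → σ ∈ L) :
    Dominates (K ∪ Cone z L) z x := by
  intro σ hσ hx
  have mem_L_or_apex_mem : σ ∈ L ∨ z ∈ σ :=
    hσ.1.elim (fun hK => Or.inl (hL σ hK hx)) mem_or_apex_mem_of_mem_cone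
  rcases mem_L_or_apex_mem with hσL | hzσ
  · exact hσ.mem_of_insert_mem (Or.inr (insert_mem_cone hσL))
  · exact hzσ

end Cone

theorem cone_dominates_general {V : Type*} [DecidableEq V] (K : Set (Finset V)) (A : Set V)
    (z : V) :
    ∀ x ∈ A, Dominates (K ∪ Cone z {σ | ∃ x ∈ A, σ ∈ ClosedStar K x}) z x :=
  fun x hxA => dominates_union_cone fun _ hσ hx => ⟨x, hxA, mem_closedStar_of_mem hσ hx⟩

/-- Let `K` be a finite abstract simplicial complex, `A` a finite set of
vertices of `K`, `L = ⋃_{x∈A} St̄(x)`, `z` not a vertex of `K`, and `K′ = K ∪ (z*L)`.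
Then `z` dominates every `x ∈ A` in `K′`: every toplex of `K′` containing `x` also
contains `z`. -/
theorem cone_dominates {V : Type*} [DecidableEq V] (K : Set (Finset V))
    (hK : IsComplex K) (hfin : K.Finite)
    (A : Set V) (hAfin : A.Finite) (hAvert : ∀ x ∈ A, ∃ σ ∈ K, x ∈ σ)
    (z : V) (hz : ∀ σ ∈ K, z ∉ σ) :
    ∀ x ∈ A, ∀ σ : Finset V,
      IsToplex (K ∪ Cone z {σ | ∃ x ∈ A, σ ∈ ClosedStar K x}) σ → x ∈ σ → z ∈ σ :=
  cone_dominates_general K A z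
end

section
/- Let K be a finite abstract simplicial complex, A a nonempty finite set of vertices of K, L = ⋃_{x∈A} St̄(x), z not a vertex of K, K′ = K ∪ (z*L), and K″ = {σ ∈ K′ : σ ∩ A = ∅} (the complex obtained from K′ by strong collapsing all vertices of A onto z). Then the map sending a simplex σ ∈ K to (σ \ A) ∪ {z} if σ ∩ A ≠ ∅ and to σ otherwise is a well-defined surjection from the simplices of K onto the simplices of K″. -/
section Collapse

variable {V : Type*} {K : Set (Finset V)} {A : Set V} {σ τ : Finset V} {x z : V}

/-- The union of the closed stars in `K` of the elements of `A`: the subcomplex `L` over which the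
cone is attached. -/
def starUnion (K : Set (Finset V)) (A : Set V) : Set (Finset V) :=
  {σ | ∃ x ∈ A, σ ∈ ClosedStar K x}

variable [DecidableEq V]

/-- The complex `K″`: the simplices disjoint from `A` in the complex `K′` obtained from `K` by
attaching a cone with apex `z` over the stars of `A`. The set `A` may be infinite. -/
def collapsedComplex (K : Set (Finset V)) (A : Set V) (z : V) : Set (Finset V) :=
  {σ ∈ K ∪ Cone z (starUnion K A) | Disjoint (σ : Set V) A}

/-- The simplex-level map of the strong collapse of `A` onto `z`, which replaces the vertices of
`σ` lying in `A`, if there are any, by `z`. The difference `σ \ A` is written as a filter since `A`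
may be infinite. -/
def collapseMap (A : Set V) [DecidablePred (· ∈ A)] (z : V) (σ : Finset V) : Finset V :=
  if ∃ x ∈ σ, x ∈ A then insert z {y ∈ σ | y ∉ A} else σ

theorem IsComplex.insert_mem (hK : IsComplex K) (hτ : τ ∈ K) (hxτ : x ∈ τ) (hστ : σ ⊆ τ) :
    insert x σ ∈ K :=
  hK.2 τ hτ _ (Finset.insert_subset hxτ hστ) (Finset.insert_nonempty x σ)

theorem IsComplex.exists_insert_mem_of_mem_starUnion (hK : IsComplex K) (hσ : σ ∈ starUnion K A) :
    ∃ x ∈ A, insert x σ ∈ K := by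
  obtain ⟨x, hxA, -, τ, hτ, hστ, hxτ⟩ := hσ
  exact ⟨x, hxA, hK.insert_mem hτ hxτ hστ⟩

theorem IsComplex.insert_mem_cone_starUnion (hK : IsComplex K) (hxA : x ∈ A)
    (hxσ : insert x σ ∈ K) (z : V) : insert z σ ∈ Cone z (starUnion K A) := by
  obtain rfl | hσ := σ.eq_empty_or_nonempty
  · exact .inl (.inr rfl)
  · have hσ_star : σ ∈ ClosedStar K x :=
      ⟨hK.2 _ hxσ σ (Finset.subset_insert x σ) hσ, _, hxσ, Finset.subset_insert x σ,
        Finset.mem_insert_self x σ⟩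
    exact .inr ⟨σ, ⟨x, hxA, hσ_star⟩, rfl⟩

theorem IsComplex.mem_or_exists_insert_mem_of_mem_cone (hK : IsComplex K) (hA : A.Nonempty)
    (hAvert : ∀ x ∈ A, ∃ σ ∈ K, x ∈ σ) (hτ : τ ∈ Cone z (starUnion K A)) :
    τ ∈ K ∨ ∃ σ, τ = insert z σ ∧ ∃ x ∈ A, insert x σ ∈ K := by
  obtain (⟨x, -, hτK, -⟩ | rfl) | ⟨σ, hσ, rfl⟩ := hτ
  · exact .inl hτK
  · obtain ⟨x, hxA⟩ := hA
    obtain ⟨ρ, hρ, hxρ⟩ := hAvert x hxA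
    exact .inr ⟨∅, rfl, x, hxA, hK.insert_mem hρ hxρ (Finset.empty_subset ρ)⟩
  · exact .inr ⟨σ, rfl, hK.exists_insert_mem_of_mem_starUnion hσ⟩

section CollapseMap

variable [DecidablePred (· ∈ A)]

theorem collapseMap_of_mem (hxσ : x ∈ σ) (hxA : x ∈ A) (z : V) :
    collapseMap A z σ = insert z {y ∈ σ | y ∉ A} :=
  if_pos ⟨x, hxσ, hxA⟩

theorem collapseMap_of_disjoint (hσ : Disjoint (σ : Set V) A) (z : V) : collapseMap A z σ = σ :=
  if_neg fun ⟨_, hxσ, hxA⟩ ↦ Set.disjoint_left.mp hσ hxσ hxA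

theorem collapseMap_insert (hxA : x ∈ A) (hσ : Disjoint (σ : Set V) A) (z : V) :
    collapseMap A z (insert x σ) = insert z σ := by
  have hfilter : {y ∈ σ | y ∉ A} = σ :=
    Finset.filter_true_of_mem fun _ hy ↦ Set.disjoint_left.mp hσ hy
  rw [collapseMap_of_mem (Finset.mem_insert_self x σ) hxA, Finset.filter_insert,
    if_neg (not_not_intro hxA), hfilter]

theorem disjoint_collapseMap (hzA : z ∉ A) (σ : Finset V) :
    Disjoint (collapseMap A z σ : Set V) A := by
  rw [Set.disjoint_left]
  intro y hy hyA
  unfold collapseMap at hy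
  split_ifs at hy with hσA
  · obtain rfl | hyσ := Finset.mem_insert.mp hy
    · exact hzA hyA
    · exact (Finset.mem_filter.mp hyσ).2 hyA
  · exact hσA ⟨y, hy, hyA⟩

theorem IsComplex.mapsTo_collapseMap (hK : IsComplex K) (hzA : z ∉ A) :
    Set.MapsTo (collapseMap A z) K (collapsedComplex K A z) := by
  intro σ hσ
  refine ⟨?_, disjoint_collapseMap hzA σ⟩
  by_cases hσA : ∃ x ∈ σ, x ∈ A
  · obtain ⟨x, hxσ, hxA⟩ := hσA
    rw [collapseMap_of_mem hxσ hxA]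
    have hface : insert x {y ∈ σ | y ∉ A} ∈ K :=
      hK.insert_mem hσ hxσ (Finset.filter_subset _ σ)
    exact .inr (hK.insert_mem_cone_starUnion hxA hface z)
  · rw [collapseMap, if_neg hσA]
    exact .inl hσ

theorem IsComplex.surjOn_collapseMap (hK : IsComplex K) (hA : A.Nonempty)
    (hAvert : ∀ x ∈ A, ∃ σ ∈ K, x ∈ σ) :
    Set.SurjOn (collapseMap A z) K (collapsedComplex K A z) := by
  rintro τ ⟨hτ, hτA⟩
  obtain hτK | ⟨σ, rfl, x, hxA, hxσ⟩ : τ ∈ K ∨ ∃ σ, τ = insert z σ ∧ ∃ x ∈ A, insert x σ ∈ K :=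
    hτ.elim .inl (hK.mem_or_exists_insert_mem_of_mem_cone hA hAvert)
  · exact ⟨τ, hτK, collapseMap_of_disjoint hτA z⟩
  · have hσA : Disjoint (σ : Set V) A :=
      hτA.mono_left (Finset.coe_subset.mpr (Finset.subset_insert z σ))
    exact ⟨insert x σ, hxσ, collapseMap_insert hxA hσA z⟩

theorem collapse_map_surjective_general (hK : IsComplex K) (hA : A.Nonempty)
    (hAvert : ∀ x ∈ A, ∃ σ ∈ K, x ∈ σ) (hzA : z ∉ A) :
    Set.MapsTo (collapseMap A z) K (collapsedComplex K A z) ∧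
      Set.SurjOn (collapseMap A z) K (collapsedComplex K A z) :=
  ⟨hK.mapsTo_collapseMap hzA, hK.surjOn_collapseMap hA hAvert⟩

end CollapseMap

theorem collapseMap_coe (A : Finset V) (z : V) :
    collapseMap (A : Set V) z =
      fun σ ↦ if (σ ∩ A).Nonempty then insert z (σ \ A) else σ := by
  funext σ
  simp only [collapseMap, Finset.mem_coe, Finset.filter_notMem_eq_sdiff, Finset.Nonempty,
    Finset.mem_inter]

theorem collapsedComplex_coe (K : Set (Finset V)) (A : Finset V) (z : V) :
    collapsedComplex K (A : Set V) z =
      {σ ∈ K ∪ Cone z {σ | ∃ x ∈ A, σ ∈ ClosedStar K x} | σ ∩ A = ∅} := by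
  simp only [collapsedComplex, starUnion, Finset.mem_coe, Finset.disjoint_coe,
    Finset.disjoint_iff_inter_eq_empty]

end Collapse

/-- Let `K` be a finite abstract simplicial complex, `A` a nonempty
finite set of vertices of `K`, `L = ⋃_{x∈A} St̄(x)`, `z` not a vertex of `K`,
`K′ = K ∪ (z*L)` and `K″ = {σ ∈ K′ : σ ∩ A = ∅}`. Then the map sending `σ ∈ K` to
`(σ \ A) ∪ {z}` if `σ ∩ A ≠ ∅` and to `σ` otherwise is a well-defined surjection
from the simplices of `K` onto the simplices of `K″`. -/
theorem collapse_map_surjective {V : Type*} [DecidableEq V] (K : Set (Finset V))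
    (hK : IsComplex K) (hfin : K.Finite)
    (A : Finset V) (hA : A.Nonempty) (hAvert : ∀ x ∈ A, ∃ σ ∈ K, x ∈ σ)
    (z : V) (hz : ∀ σ ∈ K, z ∉ σ) :
    Set.MapsTo (fun σ => if (σ ∩ A).Nonempty then insert z (σ \ A) else σ) K
        {σ ∈ K ∪ Cone z {σ | ∃ x ∈ A, σ ∈ ClosedStar K x} | σ ∩ A = ∅} ∧
      Set.SurjOn (fun σ => if (σ ∩ A).Nonempty then insert z (σ \ A) else σ) K
        {σ ∈ K ∪ Cone z {σ | ∃ x ∈ A, σ ∈ ClosedStar K x} | σ ∩ A = ∅} := by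
  have hzA : z ∉ A := fun hzA ↦ (hAvert z hzA).elim fun σ ⟨hσ, hzσ⟩ ↦ hz σ hσ hzσ
  rw [← collapseMap_coe, ← collapsedComplex_coe]
  exact collapse_map_surjective_general hK hA hAvert hzA
end

section
/- Let K be a finite abstract simplicial complex, A a nonempty finite set of vertices of K with |A| = n, L = ⋃_{x∈A} St̄(x), z not a vertex of K, K′ = K ∪ (z*L), and K″ = {σ ∈ K′ : σ ∩ A = ∅}. Then the number of simplices of K″ is at most the number of simplices of K minus (n − 1). -/
/-!
All simplices of `K″` are images of simplices of `K` under the vertex map sending `A` to `z` and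
fixing every other vertex: `{z}` is the image of `{x}` for any `x ∈ A`, and `insert z σ` with
`σ ∈ St̄(x)` disjoint from `A` is the image of `insert x σ`. This map sends the `n` vertices
`{x}`, `x ∈ A`, to the single simplex `{z}`, so its image has at most `|K| - (n - 1)` elements.
-/

theorem encard_image_add_encard_le {α β : Type*} (f : α → β) {s t : Set α} (hts : t ⊆ s)
    (hft : (f '' t).Subsingleton) : (f '' s).encard + t.encard ≤ s.encard + 1 := by
  have himage : (f '' s).encard ≤ (s \ t).encard + 1 := calc
    (f '' s).encard = (f '' (s \ t) ∪ f '' t).encard := by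
      rw [← Set.image_union, Set.sdiff_union_of_subset hts]
    _ ≤ (f '' (s \ t)).encard + (f '' t).encard := Set.encard_union_le _ _
    _ ≤ (s \ t).encard + 1 :=
      add_le_add (Set.encard_image_le f _) (Set.encard_le_one_iff_subsingleton.2 hft)
  calc (f '' s).encard + t.encard
    _ ≤ (s \ t).encard + 1 + t.encard := by gcongr
    _ = s.encard + 1 := by rw [add_right_comm, Set.encard_sdiff_add_encard_of_subset hts]

theorem ncard_add_le_ncard_add_of_encard {α β : Type*} {s : Set α} {t : Set β} {m n : ℕ}
    (ht : t.Finite) (hst : s.encard + m ≤ t.encard + n) : s.ncard + m ≤ t.ncard + n := by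
  rw [← ht.cast_ncard_eq] at hst
  have hs : s.Finite := Set.finite_of_encard_le_coe (le_self_add.trans (mod_cast hst))
  rw [← hs.cast_ncard_eq] at hst
  exact_mod_cast hst

section Complex

variable {V : Type*} {K : Set (Finset V)} {x : V} {σ : Finset V}

theorem IsComplex.singleton_mem (hK : IsComplex K) (hσ : σ ∈ K) (hx : x ∈ σ) : {x} ∈ K :=
  hK.2 σ hσ {x} (Finset.singleton_subset_iff.2 hx) (Finset.singleton_nonempty x)

theorem IsComplex.insert_mem_of_mem_closedStar [DecidableEq V] (hK : IsComplex K)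
    (hσ : σ ∈ ClosedStar K x) : insert x σ ∈ K := by
  obtain ⟨-, τ, hτ, hστ, hxτ⟩ := hσ
  exact hK.2 τ hτ (insert x σ) (Finset.insert_subset hxτ hστ) (Finset.insert_nonempty x σ)

end Complex

section CollapseVertex

variable {V : Type*} [DecidableEq V] {A σ : Finset V} {x : V}

/-- The vertex map that identifies all vertices of `A` with `z`; the simplicial map it induces
sends a simplex `σ` to `σ.image (collapseVertex A z)`. -/
def collapseVertex (A : Finset V) (z : V) : V → V :=
  A.piecewise (fun _ => z) id

theorem collapseVertex_of_mem (z : V) (hx : x ∈ A) : collapseVertex A z x = z :=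
  A.piecewise_eq_of_mem _ _ hx

theorem collapseVertex_of_notMem (z : V) (hx : x ∉ A) : collapseVertex A z x = x :=
  A.piecewise_eq_of_notMem _ _ hx

theorem image_collapseVertex_of_disjoint (z : V) (hσ : Disjoint σ A) :
    σ.image (collapseVertex A z) = σ := calc
  σ.image (collapseVertex A z) = σ.image id :=
    Finset.image_congr fun _ hv => collapseVertex_of_notMem z (Finset.disjoint_left.1 hσ hv)
  _ = σ := Finset.image_id

theorem image_collapseVertex_singleton (z : V) (hx : x ∈ A) :
    ({x} : Finset V).image (collapseVertex A z) = {z} := by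
  rw [Finset.image_singleton, collapseVertex_of_mem z hx]

theorem image_collapseVertex_insert (z : V) (hx : x ∈ A) (hσ : Disjoint σ A) :
    (insert x σ).image (collapseVertex A z) = insert z σ := by
  rw [Finset.image_insert, collapseVertex_of_mem z hx, image_collapseVertex_of_disjoint z hσ]

theorem collapse_subset_image {K : Set (Finset V)} (hK : IsComplex K) (hA : A.Nonempty)
    (hAvert : ∀ x ∈ A, ∃ σ ∈ K, x ∈ σ) (z : V) :
    {σ ∈ K ∪ Cone z {σ | ∃ x ∈ A, σ ∈ ClosedStar K x} | σ ∩ A = ∅} ⊆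
      Finset.image (collapseVertex A z) '' K := by
  rintro σ ⟨hσ, hσA⟩
  rw [← Finset.disjoint_iff_inter_eq_empty] at hσA
  rcases hσ with hσK | (⟨x, -, hσK, -⟩ | rfl) | ⟨σ, ⟨x, hx, hσx⟩, rfl⟩
  · exact ⟨σ, hσK, image_collapseVertex_of_disjoint z hσA⟩
  · exact ⟨σ, hσK, image_collapseVertex_of_disjoint z hσA⟩
  · obtain ⟨x, hx⟩ := hA
    obtain ⟨τ, hτ, hxτ⟩ := hAvert x hx
    exact ⟨{x}, hK.singleton_mem hτ hxτ, image_collapseVertex_singleton z hx⟩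
  · exact ⟨insert x σ, hK.insert_mem_of_mem_closedStar hσx,
      image_collapseVertex_insert z hx (Finset.disjoint_insert_left.1 hσA).2⟩

end CollapseVertex

theorem collapse_reduces_simplex_count_general {V : Type*} [DecidableEq V]
    {K : Set (Finset V)} (hK : IsComplex K) {A : Finset V} (hA : A.Nonempty)
    (hAvert : ∀ x ∈ A, ∃ σ ∈ K, x ∈ σ) (z : V) :
    {σ ∈ K ∪ Cone z {σ | ∃ x ∈ A, σ ∈ ClosedStar K x} | σ ∩ A = ∅}.encard + A.card ≤
      K.encard + 1 := by
  let vertices : Set (Finset V) := singleton '' (A : Set V)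
  have hvertices : vertices ⊆ K := by
    rintro _ ⟨x, hx, rfl⟩
    obtain ⟨σ, hσ, hxσ⟩ := hAvert x hx
    exact hK.singleton_mem hσ hxσ
  have hcard : vertices.encard = A.card := by
    rw [Finset.singleton_injective.encard_image, Set.encard_coe_eq_coe_finsetCard]
  have hcollapse : (Finset.image (collapseVertex A z) '' vertices).Subsingleton := by
    rintro _ ⟨_, ⟨x, hx, rfl⟩, rfl⟩ _ ⟨_, ⟨y, hy, rfl⟩, rfl⟩
    rw [image_collapseVertex_singleton z hx, image_collapseVertex_singleton z hy]
  calc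
    _ ≤ (Finset.image (collapseVertex A z) '' K).encard + A.card := by
      gcongr
      exact collapse_subset_image hK hA hAvert z
    _ = (Finset.image (collapseVertex A z) '' K).encard + vertices.encard := by rw [hcard]
    _ ≤ K.encard + 1 := encard_image_add_encard_le _ hvertices hcollapse

/-- Let `K` be a finite abstract simplicial complex, `A` a nonempty
finite set of vertices of `K` with `|A| = n`, `L = ⋃_{x∈A} St̄(x)`, `z` not a vertex
of `K`, `K′ = K ∪ (z*L)` and `K″ = {σ ∈ K′ : σ ∩ A = ∅}`. Then the number of
simplices of `K″` is at most the number of simplices of `K` minus `n − 1`. -/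
theorem collapse_reduces_simplex_count {V : Type*} [DecidableEq V] (K : Set (Finset V))
    (hK : IsComplex K) (hfin : K.Finite)
    (A : Finset V) (hA : A.Nonempty) (hAvert : ∀ x ∈ A, ∃ σ ∈ K, x ∈ σ)
    (z : V) (hz : ∀ σ ∈ K, z ∉ σ) :
    {σ ∈ K ∪ Cone z {σ | ∃ x ∈ A, σ ∈ ClosedStar K x} | σ ∩ A = ∅}.ncard ≤
      K.ncard - (A.card - 1) := by
  have hcount := ncard_add_le_ncard_add_of_encard hfin (n := 1)
    (mod_cast collapse_reduces_simplex_count_general hK hA hAvert z)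
  grind [hA.card_pos]
end

section
/- Let S be a finite abstract simplicial complex with vertex set X, let Y be the set of toplexes (inclusion-maximal simplices) of S, and define the relation R ⊆ X × Y by (x, τ) ∈ R iff x ∈ τ. Then the Dowker complex K_R equals S. -/
section

variable {V : Type*} {K : Set (Finset V)} {σ : Finset V}

theorem isToplex_iff_maximal : IsToplex K σ ↔ Maximal (· ∈ K) σ :=
  maximal_iff.symm

theorem exists_isToplex_superset_of_finite (hK : K.Finite) (hσ : σ ∈ K) :
    ∃ τ, IsToplex K τ ∧ σ ⊆ τ := by
  obtain ⟨τ, hστ, hτ⟩ := hK.exists_le_maximal hσ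
  exact ⟨τ, isToplex_iff_maximal.2 hτ, hστ⟩

theorem mem_dowkerK_membership_iff {p : Finset V → Prop} :
    σ ∈ DowkerK (fun (x : V) (τ : {τ : Finset V // p τ}) => x ∈ τ.1) ↔
      σ.Nonempty ∧ ∃ τ, p τ ∧ σ ⊆ τ :=
  and_congr_right fun _ => Subtype.exists.trans (by simp only [exists_prop, Finset.subset_iff])

theorem IsComplex.dowkerK_membership_subset (hK : IsComplex K) {p : Finset V → Prop}
    (hp : ∀ τ, p τ → τ ∈ K) :
    DowkerK (fun (x : V) (τ : {τ : Finset V // p τ}) => x ∈ τ.1) ⊆ K := by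
  intro σ hσ
  obtain ⟨hne, τ, hτ, hστ⟩ := mem_dowkerK_membership_iff.1 hσ
  exact hK.2 τ (hp τ hτ) σ hστ hne

theorem dowker_of_vertex_toplex_relation_general (hK : IsComplex K) :
    DowkerK (fun (x : V) (τ : {τ : Finset V // IsToplex K τ}) => x ∈ τ.1) = K ↔
      ∀ σ ∈ K, ∃ τ, IsToplex K τ ∧ σ ⊆ τ := by
  constructor
  · intro h σ hσ
    exact (mem_dowkerK_membership_iff.1 (h.ge hσ)).2
  · intro h
    apply (hK.dowkerK_membership_subset fun _ hτ => hτ.1).antisymm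
    exact fun σ hσ => mem_dowkerK_membership_iff.2 ⟨hK.1 σ hσ, h σ hσ⟩

end

/-- Let `S` be a finite abstract simplicial complex, `Y` its set of
toplexes, and `R` the relation given by `(x, τ) ∈ R ↔ x ∈ τ`. Then the Dowker
complex `K_R` equals `S`. -/
theorem dowker_of_vertex_toplex_relation {V : Type*} (S : Set (Finset V))
    (hS : IsComplex S) (hfin : S.Finite) :
    DowkerK (fun (x : V) (τ : {τ : Finset V // IsToplex S τ}) => x ∈ τ.1) = S := by
  exact (dowker_of_vertex_toplex_relation_general hS).2 fun _ hσ =>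
    exists_isToplex_superset_of_finite hfin hσ
end

section
/- Let R ⊆ X × Y be a relation between finite sets, let x_i, x_j ∈ X be distinct with R(x_i) ∪ R(x_j) ≠ ∅, and let R′ be the reduced relation obtained from R by replacing x_i and x_j with a new element z. Then the vertex set of the closed star of z in K_{R′} satisfies V(St̄_{K_{R′}}(z)) = ((V(St̄_{K_R}(x_i)) ∪ V(St̄_{K_R}(x_j))) \ {x_i, x_j}) ∪ {z}. -/
/-- The vertex set of a collection of simplices: the union of its members. -/
def vertexSet {V : Type*} (K : Set (Finset V)) : Set V :=
  {v | ∃ σ ∈ K, v ∈ σ}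

/-- The reduced relation `R′ ⊆ X′ × Y` obtained from `R ⊆ X × Y` by replacing the two
rows `xi` and `xj` by a new element `z` (encoded as `none`), with
`R′(z) = R(xi) ∪ R(xj)` and `R′(x) = R(x)` for `x ∈ X \ {xi, xj}`. -/
def ReducedRel {X Y : Type*} (R : X → Y → Prop) (xi xj : X) :
    Option {x : X // x ≠ xi ∧ x ≠ xj} → Y → Prop
  | none, y => R xi y ∨ R xj y
  | some x, y => R x.1 y

section ClosedStar

variable {V Y : Type*}

theorem mem_vertexSet_closedStar {K : Set (Finset V)} {v x : V} :
    v ∈ vertexSet (ClosedStar K x) ↔ ∃ τ ∈ K, v ∈ τ ∧ x ∈ τ := by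
  constructor
  · rintro ⟨σ, ⟨-, τ, hτ, hστ, hx⟩, hv⟩
    exact ⟨τ, hτ, hστ hv, hx⟩
  · rintro ⟨τ, hτ, hv, hx⟩
    exact ⟨τ, ⟨hτ, τ, hτ, subset_rfl, hx⟩, hv⟩

theorem pair_mem_dowkerK [DecidableEq V] {R : V → Y → Prop} {v x : V} :
    {v, x} ∈ DowkerK R ↔ ∃ y, R v y ∧ R x y := by
  simp [DowkerK]

theorem mem_vertexSet_closedStar_dowkerK {R : V → Y → Prop} {v x : V} :
    v ∈ vertexSet (ClosedStar (DowkerK R) x) ↔ ∃ y, R v y ∧ R x y := by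
  classical
  rw [mem_vertexSet_closedStar]
  constructor
  · rintro ⟨τ, ⟨-, y, hy⟩, hv, hx⟩
    exact ⟨y, hy v hv, hy x hx⟩
  · intro h
    exact ⟨{v, x}, pair_mem_dowkerK.mpr h, by simp, by simp⟩

end ClosedStar

section ReducedRel

variable {X Y : Type*} {R : X → Y → Prop} {xi xj : X}

theorem none_mem_vertexSet_closedStar_reducedRel :
    none ∈ vertexSet (ClosedStar (DowkerK (ReducedRel R xi xj)) none) ↔
      ∃ y, R xi y ∨ R xj y := by
  simp only [mem_vertexSet_closedStar_dowkerK, ReducedRel, and_self]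

theorem some_mem_vertexSet_closedStar_reducedRel {x : {x : X // x ≠ xi ∧ x ≠ xj}} :
    some x ∈ vertexSet (ClosedStar (DowkerK (ReducedRel R xi xj)) none) ↔
      x.1 ∈ vertexSet (ClosedStar (DowkerK R) xi) ∪ vertexSet (ClosedStar (DowkerK R) xj) := by
  simp only [Set.mem_union, mem_vertexSet_closedStar_dowkerK, ReducedRel, and_or_left, exists_or]

end ReducedRel

theorem vertexSet_star_of_new_vertex_general {X Y : Type*}
    (R : X → Y → Prop) (xi xj : X) (hne : ∃ y, R xi y ∨ R xj y) :
    vertexSet (ClosedStar (DowkerK (ReducedRel R xi xj)) none) =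
      {none} ∪ {w | ∃ (x : X) (hx : x ≠ xi ∧ x ≠ xj), w = some ⟨x, hx⟩ ∧
        (x ∈ vertexSet (ClosedStar (DowkerK R) xi) ∪
          vertexSet (ClosedStar (DowkerK R) xj))} := by
  ext (_ | ⟨x, hx⟩)
  · exact iff_of_true (none_mem_vertexSet_closedStar_reducedRel.mpr hne) (Or.inl rfl)
  · rw [some_mem_vertexSet_closedStar_reducedRel]
    constructor
    · exact fun h ↦ Or.inr ⟨x, hx, rfl, h⟩
    · rintro (⟨⟨⟩⟩ | ⟨_, _, ⟨rfl⟩, h⟩)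
      exact h

/-- Let `R ⊆ X × Y` be a relation between finite sets, `xi ≠ xj` with
`R(xi) ∪ R(xj) ≠ ∅`, and `R′` the reduced relation replacing `xi, xj` by `z`. Then
`V(St̄_{K_{R′}}(z)) = ((V(St̄_{K_R}(xi)) ∪ V(St̄_{K_R}(xj))) \ {xi, xj}) ∪ {z}`
(the removal of `xi, xj` being encoded by the subtype `{x // x ≠ xi ∧ x ≠ xj}`). -/
theorem vertexSet_star_of_new_vertex {X Y : Type*} [Fintype X] [Fintype Y]
    (R : X → Y → Prop) (xi xj : X) (hij : xi ≠ xj)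
    (hne : ∃ y, R xi y ∨ R xj y) :
    vertexSet (ClosedStar (DowkerK (ReducedRel R xi xj)) none) =
      {none} ∪ {w | ∃ (x : X) (hx : x ≠ xi ∧ x ≠ xj), w = some ⟨x, hx⟩ ∧
        (x ∈ vertexSet (ClosedStar (DowkerK R) xi) ∪
          vertexSet (ClosedStar (DowkerK R) xj))} :=
  vertexSet_star_of_new_vertex_general R xi xj hne
end
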